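/- (Corollary 4.4.) Suppose there exists δ₀ > 0 such that for every δ with 0 < δ ≤ δ₀ and every pair of sequences q₁, q₂ on the network N that are not shift-related, S_δ(q₁) ∩ S_δ(q₂) = ∅ (the conclusion of Lemma 4.2, uniformly), and suppose every set S_δ(q) is Lebesgue measurable. Then the set of fragmentarily asymptotically stable sequences on N is countable. -/

import Mathlib

open MeasureTheory Filter Topology Metric Set

noncomputable section

/-- The shift operator `Σ` on sequences: `(Σ q) k = q (k+1)`. -/
def shiftSeq {A : Type*} (q : ℕ → A) : ℕ → A := fun k => q (k + 1)

/-- A sequence is preperiodic if there exist `K ≥ 1` and `K₀ ≥ 0` with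
`q (k + K) = q k` for all `k > K₀`. -/
def PreperiodicSeq {A : Type*} (q : ℕ → A) : Prop :=
  ∃ K : ℕ, 1 ≤ K ∧ ∃ K₀ : ℕ, ∀ k > K₀, q (k + K) = q k

/-- Euclidean space `ℝ^d`. -/
abbrev Es (d : ℕ) := EuclideanSpace ℝ (Fin d)

/-- The heteroclinic network as a subset of phase space:
`N = (⋃ p, {ξ p}) ∪ (⋃ j, γ j)`. -/
def netSet {d P Q : ℕ} (ξ : Fin P → Es d) (γ : Fin Q → Set (Es d)) : Set (Es d) :=
  (⋃ p, {ξ p}) ∪ ⋃ j, γ j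

/-- `x` follows the sequence `q` within `UN`: there are times
`0 ≤ t 0 < t' 0 < t 1 < t' 1 < ⋯` such that the trajectory of `x` stays in `UN`
after time `t 0`, visits the neighborhoods `U (a (q k))` and `V (q k)` at times
`t k` and `t' k`, and between `t' k` and `t' (k+1)` avoids all neighborhoods
`U p` with `p ≠ b (q k)`. -/
def FollowsSeq {d P Q : ℕ} (φ : ℝ → Es d → Es d)
    (U : Fin P → Set (Es d)) (V : Fin Q → Set (Es d))
    (a b : Fin Q → Fin P) (UN : Set (Es d)) (q : ℕ → Fin Q) (x : Es d) : Prop :=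
  ∃ t t' : ℕ → ℝ,
    0 ≤ t 0 ∧ (∀ k, t k < t' k) ∧ (∀ k, t' k < t (k + 1)) ∧
    (∀ s, t 0 < s → φ s x ∈ UN) ∧
    (∀ k, φ (t k) x ∈ U (a (q k))) ∧
    (∀ k, φ (t' k) x ∈ V (q k)) ∧
    (∀ k, ∀ s, t' k < s → s < t' (k + 1) → ∀ p, p ≠ b (q k) → φ s x ∉ U p)

/-- The `δ`-stable set `S_δ(q)` of a sequence `q`. -/
def stableSet {d P Q : ℕ} (φ : ℝ → Es d → Es d) (ξ : Fin P → Es d) (γ : Fin Q → Set (Es d))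
    (U : Fin P → Set (Es d)) (V : Fin Q → Set (Es d)) (a b : Fin Q → Fin P)
    (δ : ℝ) (q : ℕ → Fin Q) : Set (Es d) :=
  {x ∈ thickening δ (netSet ξ γ) |
    FollowsSeq φ U V a b (thickening δ (netSet ξ γ)) q x}

/-- The set `A_δ(q)` of points attracted to `N` along `q`. -/
def attrSet {d P Q : ℕ} (φ : ℝ → Es d → Es d) (ξ : Fin P → Es d) (γ : Fin Q → Set (Es d))
    (U : Fin P → Set (Es d)) (V : Fin Q → Set (Es d)) (a b : Fin Q → Fin P)
    (δ : ℝ) (q : ℕ → Fin Q) : Set (Es d) :=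
  {x ∈ stableSet φ ξ γ U V a b δ q |
    Tendsto (fun t => infDist (φ t x) (netSet ξ γ)) atTop (𝓝 0)}

/-- The asymptotic `δ`-basin of attraction `B_δ(q) = ⋃ k, A_δ(Σ^k q)`. -/
def basin {d P Q : ℕ} (φ : ℝ → Es d → Es d) (ξ : Fin P → Es d) (γ : Fin Q → Set (Es d))
    (U : Fin P → Set (Es d)) (V : Fin Q → Set (Es d)) (a b : Fin Q → Fin P)
    (δ : ℝ) (q : ℕ → Fin Q) : Set (Es d) :=
  ⋃ k : ℕ, attrSet φ ξ γ U V a b δ (shiftSeq^[k] q)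

/-- The difference set `D_δ^(k)(q) = A_δ(Σ^k q) \ A_δ(Σ^(k-1) q)` (for `k ≥ 1`). -/
def Dset {d P Q : ℕ} (φ : ℝ → Es d → Es d) (ξ : Fin P → Es d) (γ : Fin Q → Set (Es d))
    (U : Fin P → Set (Es d)) (V : Fin Q → Set (Es d)) (a b : Fin Q → Fin P)
    (δ : ℝ) (q : ℕ → Fin Q) (k : ℕ) : Set (Es d) :=
  attrSet φ ξ γ U V a b δ (shiftSeq^[k] q) \
    attrSet φ ξ γ U V a b δ (shiftSeq^[k - 1] q)

/-- Fragmentary asymptotic stability of a sequence: `μ(B_δ(q)) > 0` for every `δ > 0`. -/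
def FAS {d P Q : ℕ} (φ : ℝ → Es d → Es d) (ξ : Fin P → Es d) (γ : Fin Q → Set (Es d))
    (U : Fin P → Set (Es d)) (V : Fin Q → Set (Es d)) (a b : Fin Q → Fin P)
    (q : ℕ → Fin Q) : Prop :=
  ∀ δ : ℝ, 0 < δ → 0 < volume (basin φ ξ γ U V a b δ q)

theorem countable_preimage_shiftSeq {A : Type*} [Countable A] {s : Set (ℕ → A)}
    (hs : s.Countable) : (shiftSeq ⁻¹' s).Countable := by
  have hinj : Function.Injective fun q : ℕ → A => (q 0, shiftSeq q) := by
    intro q r h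
    obtain ⟨h₀, h₁⟩ := Prod.mk.inj h
    funext k
    cases k with
    | zero => exact h₀
    | succ k => exact congrFun h₁ k
  refine (((countable_univ (α := A)).prod hs).preimage_of_injOn hinj.injOn).mono ?_
  intro q hq
  exact ⟨mem_univ _, hq⟩

theorem countable_preimage_iterate {α : Type*} {f : α → α}
    (hf : ∀ s : Set α, s.Countable → (f ⁻¹' s).Countable) (n : ℕ) {s : Set α}
    (hs : s.Countable) : (f^[n] ⁻¹' s).Countable := by
  induction n with
  | zero => exact hs
  | succ n ih =>
    rw [Function.iterate_succ, preimage_comp]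
    exact hf _ ih

/-- Two points are tail equivalent if their forward orbits under `f` meet. -/
def tailSetoid {α : Type*} (f : α → α) : Setoid α where
  r x y := ∃ m n : ℕ, f^[m] x = f^[n] y
  iseqv :=
    { refl := fun _ => ⟨0, 0, rfl⟩
      symm := fun ⟨m, n, h⟩ => ⟨n, m, h.symm⟩
      trans := by
        rintro x y z ⟨m, n, h⟩ ⟨k, l, h'⟩
        refine ⟨k + m, n + l, ?_⟩
        rw [Function.iterate_add_apply, h, Function.iterate_add_apply, ← h',
          ← Function.iterate_add_apply, ← Function.iterate_add_apply, add_comm] }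

/-- If `f` has countable fibres, then a family of measurable sets of positive measure, disjoint
whenever neither index lies on the forward orbit of the other, has countable index set. -/
theorem countable_of_disjoint_of_not_orbit_related {α X : Type*} [MeasurableSpace X]
    (μ : Measure X) [SFinite μ] {f : α → α}
    (hf : ∀ s : Set α, s.Countable → (f ⁻¹' s).Countable) {S : α → Set X} {T : Set α}
    (hmeas : ∀ x ∈ T, MeasurableSet (S x)) (hpos : ∀ x ∈ T, 0 < μ (S x))
    (hdisj : ∀ x ∈ T, ∀ y ∈ T, (¬ ∃ k : ℕ, f^[k] x = y ∨ f^[k] y = x) →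
      Disjoint (S x) (S y)) :
    T.Countable := by
  let r : Setoid T := (tailSetoid f).comap Subtype.val
  have hquot : Countable (Quotient r) := by
    have hc := Measure.countable_meas_pos_of_disjoint_iUnion (μ := μ)
      (As := fun c : Quotient r => S c.out) (fun c => hmeas _ c.out.2) (by
        intro c c' hne
        refine hdisj _ c.out.2 _ c'.out.2 ?_
        rintro ⟨k, h | h⟩
        · exact hne (Quotient.out_equiv_out.1 ⟨k, 0, h⟩)
        · exact hne (Quotient.out_equiv_out.1 ⟨0, k, h.symm⟩))
    rw [← countable_univ_iff]
    exact hc.mono fun c _ => hpos _ c.out.2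
  have hcover : T ⊆ ⋃ c : Quotient r, ⋃ m : ℕ, ⋃ n : ℕ, f^[m] ⁻¹' {f^[n] c.out} := by
    intro x hx
    obtain ⟨m, n, h⟩ := Quotient.exact (Quotient.out_eq (Quotient.mk r ⟨x, hx⟩))
    simp only [mem_iUnion]
    exact ⟨_, n, m, h.symm⟩
  refine Countable.mono hcover ?_
  exact countable_iUnion fun _ => countable_iUnion fun m => countable_iUnion fun _ =>
    countable_preimage_iterate hf m (countable_singleton _)

theorem shiftSeq_iterate_apply {A : Type*} (q : ℕ → A) (n k : ℕ) :
    shiftSeq^[n] q k = q (k + n) := by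
  induction n generalizing q with
  | zero => rfl
  | succ n ih =>
    rw [Function.iterate_succ_apply, ih]
    rfl

/-- Corollary 4.4: under the (uniform) conclusion of Lemma 4.2 and measurability of the `δ`-stable sets, there are at most countably many f.a.s. sequences on the network. -/
theorem countable_fas_sequences
    {d P Q : ℕ} (hd : 1 ≤ d) (hP : 1 ≤ P) (hQ : 1 ≤ Q)
    (φ : ℝ → Es d → Es d)
    (hφcont : Continuous fun pr : ℝ × Es d => φ pr.1 pr.2)
    (hφ0 : ∀ x, φ 0 x = x)
    (hφadd : ∀ s t x, φ (s + t) x = φ s (φ t x))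
    (ξ : Fin P → Es d) (hξinj : Function.Injective ξ)
    (hfix : ∀ t p, φ t (ξ p) = ξ p)
    (γ : Fin Q → Set (Es d)) (hγne : ∀ j, (γ j).Nonempty)
    (hγinv : ∀ j t x, x ∈ γ j → φ t x ∈ γ j)
    (a b : Fin Q → Fin P)
    (hω : ∀ j, ∀ x ∈ γ j, Tendsto (fun t => φ t x) atTop (𝓝 (ξ (b j))))
    (hα : ∀ j, ∀ x ∈ γ j, Tendsto (fun t => φ t x) atBot (𝓝 (ξ (a j))))
    (ζ : Fin Q → Es d) (hζ : ∀ j, ζ j ∈ γ j)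
    (U : Fin P → Set (Es d)) (hUopen : ∀ p, IsOpen (U p)) (hUmem : ∀ p, ξ p ∈ U p)
    (V : Fin Q → Set (Es d)) (hVopen : ∀ j, IsOpen (V j)) (hVmem : ∀ j, ζ j ∈ V j)
    (hUU : ∀ p p', p ≠ p' → Disjoint (closure (U p)) (closure (U p')))
    (hVV : ∀ j j', j ≠ j' → Disjoint (closure (V j)) (closure (V j')))
    (hUV : ∀ p j, Disjoint (closure (U p)) (closure (V j)))
    (δ₀ : ℝ) (hδ₀ : 0 < δ₀)
    (hdisjS : ∀ δ : ℝ, 0 < δ → δ ≤ δ₀ → ∀ q₁ q₂ : ℕ → Fin Q,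
      (∀ k, b (q₁ k) = a (q₁ (k + 1))) → (∀ k, b (q₂ k) = a (q₂ (k + 1))) →
      (¬ ∃ k : ℕ, shiftSeq^[k] q₁ = q₂ ∨ shiftSeq^[k] q₂ = q₁) →
      stableSet φ ξ γ U V a b δ q₁ ∩ stableSet φ ξ γ U V a b δ q₂ = ∅)
    (hmeasS : ∀ δ : ℝ, 0 < δ → ∀ q : ℕ → Fin Q,
      MeasurableSet (stableSet φ ξ γ U V a b δ q)) :
    {q : ℕ → Fin Q | (∀ k, b (q k) = a (q (k + 1))) ∧ FAS φ ξ γ U V a b q}.Countable := by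
  set T : Set (ℕ → Fin Q) := {q | (∀ k, b (q k) = a (q (k + 1))) ∧
    0 < volume (stableSet φ ξ γ U V a b δ₀ q)}
  have hT : T.Countable :=
    countable_of_disjoint_of_not_orbit_related volume
      (fun _ hs => countable_preimage_shiftSeq hs) (fun q _ => hmeasS δ₀ hδ₀ q)
      (fun _ hq => hq.2) fun q₁ h₁ q₂ h₂ h =>
        disjoint_iff_inter_eq_empty.2 (hdisjS δ₀ hδ₀ le_rfl q₁ q₂ h₁.1 h₂.1 h)
  refine (countable_iUnion fun n : ℕ => countable_preimage_iterate
    (fun _ hs => countable_preimage_shiftSeq hs) n hT).mono ?_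
  rintro q ⟨hq, hfas⟩
  obtain ⟨n, hn⟩ := exists_measure_pos_of_not_measure_iUnion_null (hfas δ₀ hδ₀).ne'
  refine mem_iUnion.2 ⟨n, fun k => ?_, hn.trans_le (measure_mono fun _ hx => hx.1)⟩
  rw [shiftSeq_iterate_apply, shiftSeq_iterate_apply, hq, add_right_comm]
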